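/- There exists a set of 22 points of PHG(2, ℤ/4ℤ) with at most 5 points on each line; explicitly, the points spanned by (1,0,0), (0,1,0), (0,0,1), (1,1,1), (0,1,1), (1,0,1), (1,1,0), (1,2,2), (2,1,2), (2,2,1), (1,3,3), (2,1,3), (1,2,3), (1,3,2), (1,2,0), (2,1,0), (2,0,1), (1,3,1), (1,0,2), (0,1,2), (0,2,1), (1,1,3) form such a set, and moreover every multiset of 23 points of PHG(2, ℤ/4ℤ) has a line containing at least 6 of its points counted with multiplicity. -/

import Mathlib

/-- A point of a projective Hjelmslev geometry PHG(n-1, R): a free rank-1 submodule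
of Rⁿ, i.e. the R-span of a vector having at least one unit coordinate. -/
def IsPoint {R : Type} [CommRing R] {n : ℕ} (P : Submodule R (Fin n → R)) : Prop :=
  ∃ v : Fin n → R, (∃ i, IsUnit (v i)) ∧ P = Submodule.span R {v}

/-- A free rank-k submodule of Rⁿ: a submodule linearly isomorphic to Rᵏ. -/
def IsFreeRank {R : Type} [CommRing R] {n : ℕ} (k : ℕ) (L : Submodule R (Fin n → R)) : Prop :=
  Nonempty ((Fin k → R) ≃ₗ[R] L)

/-- A line of PHG(2, R): a free rank-2 submodule of R³. -/
abbrev IsLine {R : Type} [CommRing R] (L : Submodule R (Fin 3 → R)) : Prop := IsFreeRank 2 L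

abbrev R4 := ZMod 4

/-- The point of PHG(2, ℤ/4ℤ) spanned by a vector. -/
def pt (v : Fin 3 → R4) : Submodule R4 (Fin 3 → R4) := Submodule.span R4 {v}

/-- The 22 listed points. -/
noncomputable def A22 : Set (Submodule R4 (Fin 3 → R4)) :=
  pt '' {![1,0,0], ![0,1,0], ![0,0,1], ![1,1,1], ![0,1,1], ![1,0,1], ![1,1,0],
    ![1,2,2], ![2,1,2], ![2,2,1], ![1,3,3], ![2,1,3], ![1,2,3], ![1,3,2],
    ![1,2,0], ![2,1,0], ![2,0,1], ![1,3,1], ![1,0,2], ![0,1,2], ![0,2,1], ![1,1,3]}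

/-- The dot product, written out. -/
def dot3 (c v : Fin 3 → R4) : R4 := c 0 * v 0 + c 1 * v 1 + c 2 * v 2

/-- Having a unit coordinate, in a computable form. -/
def uni (v : Fin 3 → R4) : Prop := 2 * v 0 ≠ 0 ∨ 2 * v 1 ≠ 0 ∨ 2 * v 2 ≠ 0

instance instDecidableUni (v : Fin 3 → R4) : Decidable (uni v) :=
  inferInstanceAs (Decidable (2 * v 0 ≠ 0 ∨ 2 * v 1 ≠ 0 ∨ 2 * v 2 ≠ 0))

lemma unit_iff (x : R4) : IsUnit x ↔ 2 * x ≠ 0 := by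
  rw [isUnit_iff_exists_inv]; revert x; decide

lemma uni_iff (v : Fin 3 → R4) : (∃ i, IsUnit (v i)) ↔ uni v := by
  simp [unit_iff, uni, Fin.exists_fin_succ]

/-- The 22 vectors as a finset. -/
def T22 : Finset (Fin 3 → R4) := {![1,0,0], ![0,1,0], ![0,0,1], ![1,1,1], ![0,1,1], ![1,0,1],
    ![1,1,0], ![1,2,2], ![2,1,2], ![2,2,1], ![1,3,3], ![2,1,3], ![1,2,3], ![1,3,2],
    ![1,2,0], ![2,1,0], ![2,0,1], ![1,3,1], ![1,0,2], ![0,1,2], ![0,2,1], ![1,1,3]}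

lemma T22_card : T22.card = 22 := by decide +kernel

lemma T22_uni : ∀ v ∈ T22, uni v := by decide +kernel

lemma T22_inj : ∀ v ∈ T22, ∀ w ∈ T22, (∃ a : R4, a • w = v) → v = w := by decide +kernel

lemma T22_line : ∀ c, uni c → (T22.filter fun v => dot3 c v = 0).card ≤ 5 := by decide +kernel

/-- The cross product. -/
def crs (a b : Fin 3 → R4) : Fin 3 → R4 :=
  ![a 1 * b 2 - a 2 * b 1, a 2 * b 0 - a 0 * b 2, a 0 * b 1 - a 1 * b 0]

lemma crs_uni : ∀ a b : Fin 3 → R4, uni a → uni b → uni (a + b) → uni (crs a b) := by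
  decide +kernel

lemma dot_crs (a b : Fin 3 → R4) (r s : R4) : dot3 (crs a b) (r • a + s • b) = 0 := by
  simp [dot3, crs]; ring

/-- The (vectors of) lines meeting the neighbour class of `t`. -/
def Ct (t : Fin 3 → R4) : Finset (Fin 3 → R4) :=
  Finset.univ.filter fun c => uni c ∧ 2 * dot3 c t = 0

/-- Representatives of the seven neighbour classes. -/
def reps : Finset (Fin 3 → R4) :=
  {![1,0,0], ![0,1,0], ![0,0,1], ![1,1,0], ![1,0,1], ![0,1,1], ![1,1,1]}

/-- Being neighbours. -/
def nb (t v : Fin 3 → R4) : Prop := 2 * v 0 = 2 * t 0 ∧ 2 * v 1 = 2 * t 1 ∧ 2 * v 2 = 2 * t 2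

instance instDecidableNb (t v : Fin 3 → R4) : Decidable (nb t v) :=
  inferInstanceAs (Decidable (2 * v 0 = 2 * t 0 ∧ 2 * v 1 = 2 * t 1 ∧ 2 * v 2 = 2 * t 2))

lemma Ct_card : ∀ t ∈ reps, (Ct t).card = 24 := by decide +kernel

lemma Ct_count : ∀ t ∈ reps, ∀ v, uni v →
    ((Ct t).filter fun c => dot3 c v = 0).card = 4 + 8 * (if nb t v then 1 else 0) := by
  decide +kernel

lemma reps_count : ∀ v, uni v → (reps.filter fun t => nb t v).card = 1 := by decide +kernel

lemma countP_sum {α β : Type} (N : Multiset α) (S : Finset β) (r : β → α → Prop)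
    [∀ b a, Decidable (r b a)] :
    ∑ b ∈ S, N.countP (r b) = (N.map fun a => (S.filter fun b => r b a).card).sum := by
  induction N using Multiset.induction with
  | empty => simp
  | cons a N ih =>
    simp only [Multiset.countP_cons, Finset.sum_add_distrib, ih, Multiset.map_cons,
      Multiset.sum_cons, Finset.card_filter]
    ring

lemma main_count (N : Multiset (Fin 3 → R4)) (hN : ∀ v ∈ N, uni v) (h23 : N.card = 23)
    (h5 : ∀ c, uni c → N.countP (fun v => dot3 c v = 0) ≤ 5) : False := by
  have h3 : ∀ t ∈ reps, N.countP (nb t) ≤ 3 := by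
    intro t ht
    have h1 : ∑ c ∈ Ct t, N.countP (fun v => dot3 c v = 0) ≤ ∑ c ∈ Ct t, 5 :=
      Finset.sum_le_sum fun c hc => h5 c (Finset.mem_filter.1 hc).2.1
    rw [countP_sum N (Ct t) (fun c v => dot3 c v = 0), Finset.sum_const, Ct_card t ht,
      Multiset.map_congr rfl (fun v hv => Ct_count t ht v (hN v hv))] at h1
    rw [Multiset.sum_map_add, Multiset.sum_map_mul_left] at h1
    have h2 : (N.map fun v => if nb t v then 1 else 0).sum = N.countP (nb t) := by
      clear h1 hN h23 h5
      induction N using Multiset.induction with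
      | empty => simp
      | cons a N ih => simp [Multiset.countP_cons, ih, add_comm]
    rw [h2] at h1
    simp [h23] at h1
    omega
  have h4 := Finset.sum_le_sum h3
  rw [countP_sum N reps nb, Multiset.map_congr rfl (fun v hv => reps_count v (hN v hv)),
    Finset.sum_const] at h4
  have : reps.card = 7 := by decide +kernel
  simp [h23, this] at h4

/-- The line with equation `c`. -/
def ln (c : Fin 3 → R4) : Submodule R4 (Fin 3 → R4) where
  carrier := {v | dot3 c v = 0}
  zero_mem' := by simp [dot3]
  add_mem' := by
    intro a b ha hb
    simp only [Set.mem_setOf_eq, dot3, Pi.add_apply] at *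
    linear_combination ha + hb
  smul_mem' := by
    intro r a ha
    simp only [Set.mem_setOf_eq, dot3, Pi.smul_apply, smul_eq_mul] at *
    linear_combination r * ha

lemma mem_ln (c v : Fin 3 → R4) : v ∈ ln c ↔ dot3 c v = 0 := Iff.rfl

lemma dot3_eq (c v : Fin 3 → R4) (i : Fin 3) :
    dot3 c v = c i * v i + ∑ j : Fin 2, c (i.succAbove j) * v (i.succAbove j) := by
  rw [← Fin.sum_univ_succAbove (fun k => c k * v k) i, Fin.sum_univ_three, dot3]

lemma ln_isLine (c : Fin 3 → R4) (hc : uni c) : IsLine (ln c) := by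
  obtain ⟨i, hi⟩ := (uni_iff c).2 hc
  obtain ⟨u, hu⟩ := isUnit_iff_exists_inv.1 hi
  let f : ln c →ₗ[R4] (Fin 2 → R4) :=
    (LinearMap.funLeft R4 R4 i.succAbove).comp (ln c).subtype
  have hf : ∀ (v : ln c) j, f v j = v.1 (i.succAbove j) := fun _ _ => rfl
  refine ⟨(LinearEquiv.ofBijective f ⟨?_, ?_⟩).symm⟩
  · rw [injective_iff_map_eq_zero]
    intro v hv
    have h0 : ∀ j, v.1 (i.succAbove j) = 0 := fun j => by rw [← hf, hv]; rfl
    have h1 := (mem_ln _ _).1 v.2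
    rw [dot3_eq c v.1 i] at h1
    simp only [h0, mul_zero, Finset.sum_const_zero, add_zero] at h1
    have h2 : v.1 i = 0 := by linear_combination u * h1 - v.1 i * hu
    apply Subtype.ext
    funext k
    rcases Fin.eq_self_or_eq_succAbove i k with rfl | ⟨j, rfl⟩
    · exact h2
    · exact h0 j
  · intro w
    refine ⟨⟨Fin.insertNth (α := fun _ => R4) i
      (-u * ∑ j : Fin 2, c (i.succAbove j) * w j) w, ?_⟩, ?_⟩
    · rw [mem_ln, dot3_eq c _ i]
      simp only [Fin.insertNth_apply_same, Fin.insertNth_apply_succAbove]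
      linear_combination (-∑ j : Fin 2, c (i.succAbove j) * w j) * hu
    · funext j
      rw [hf]; simp

lemma pt_le_ln (c v : Fin 3 → R4) : pt v ≤ ln c ↔ dot3 c v = 0 := by
  rw [pt, Submodule.span_singleton_le_iff_mem, mem_ln]

lemma not_uni (v : Fin 3 → R4) (h : ¬ uni v) : (2 : R4) • v = 0 := by
  simp only [uni, not_or, not_not] at h
  funext k
  fin_cases k
  · exact h.1
  · exact h.2.1
  · exact h.2.2

lemma line_le (L : Submodule R4 (Fin 3 → R4)) (hL : IsLine L) : ∃ c, uni c ∧ L ≤ ln c := by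
  obtain ⟨e⟩ := hL
  have key : ∀ w : Fin 2 → R4, (2 : R4) • w ≠ 0 → uni (e w).1 := by
    intro w hw
    by_contra h
    apply hw
    have h2 := not_uni _ h
    apply e.injective
    rw [map_smul, map_zero]
    exact Subtype.ext h2
  refine ⟨crs (e ![1,0]).1 (e ![0,1]).1, crs_uni _ _ (key _ (by decide)) (key _ (by decide)) ?_, ?_⟩
  · have := key (![1,0] + ![0,1]) (by decide)
    rwa [map_add] at this
  · intro v hv
    rw [mem_ln]
    have h1 : (e.symm ⟨v, hv⟩) = (e.symm ⟨v, hv⟩) 0 • ![1,0] + (e.symm ⟨v, hv⟩) 1 • ![0,1] := by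
      funext k; fin_cases k <;> simp
    have h2 := congrArg (fun w => (e w).1) h1
    simp only [map_add, map_smul, LinearEquiv.apply_symm_apply] at h2
    have h3 : v = (e.symm ⟨v, hv⟩) 0 • (e ![1,0]).1 + (e.symm ⟨v, hv⟩) 1 • (e ![0,1]).1 := h2
    rw [h3]
    exact dot_crs _ _ _ _

lemma pt_inj : Set.InjOn pt (T22 : Set (Fin 3 → R4)) := by
  intro v hv w hw h
  apply T22_inj v hv w hw
  apply Submodule.mem_span_singleton.1
  have : v ∈ pt v := Submodule.mem_span_singleton_self v
  rw [h] at this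
  exact this

lemma A22_eq : A22 = pt '' (T22 : Set (Fin 3 → R4)) := by
  simp [A22, T22]

lemma A22_line (L : Submodule R4 (Fin 3 → R4)) (hL : IsLine L) :
    {P ∈ A22 | P ≤ L}.ncard ≤ 5 := by
  obtain ⟨c, hc, hLc⟩ := line_le L hL
  have hsub : {P ∈ A22 | P ≤ L} ⊆
      pt '' ((T22.filter fun v => dot3 c v = 0 : Finset _) : Set (Fin 3 → R4)) := by
    rw [A22_eq]
    rintro _ ⟨⟨v, hv, rfl⟩, hP⟩
    refine ⟨v, ?_, rfl⟩
    rw [Finset.mem_coe, Finset.mem_filter]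
    exact ⟨hv, (pt_le_ln c v).1 (hP.trans hLc)⟩
  refine (Set.ncard_le_ncard hsub (Set.toFinite _)).trans ?_
  refine (Set.ncard_image_le (Set.toFinite _)).trans ?_
  rw [Set.ncard_coe_finset]
  exact T22_line c hc

attribute [local instance] Classical.propDecidable

/-- The 22 listed points form a (22,5)-arc in PHG(2, ℤ/4ℤ), and every multiset of
23 points has a line containing at least 6 of its points counted with multiplicity. -/
theorem max_five_arc_Z4 :
    ((∀ P ∈ A22, IsPoint P) ∧ A22.ncard = 22 ∧
      ∀ L : Submodule R4 (Fin 3 → R4), IsLine L → {P ∈ A22 | P ≤ L}.ncard ≤ 5) ∧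
    (∀ M : Multiset (Submodule R4 (Fin 3 → R4)), (∀ P ∈ M, IsPoint P) →
      Multiset.card M = 23 →
      ∃ L : Submodule R4 (Fin 3 → R4), IsLine L ∧
        6 ≤ Multiset.card (M.filter fun P => P ≤ L)) := by
  refine ⟨⟨?_, ?_, ?_⟩, ?_⟩
  · rw [A22_eq]
    rintro _ ⟨v, hv, rfl⟩
    exact ⟨v, (uni_iff v).2 (T22_uni v hv), rfl⟩
  · rw [A22_eq, Set.ncard_image_of_injOn pt_inj, Set.ncard_coe_finset, T22_card]
  · exact A22_line
  · intro M hM h23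
    by_contra! hcon
    choose! g hg1 hg2 using hM
    have hMN : (M.map g).map pt = M := by
      rw [Multiset.map_map]
      conv_rhs => rw [← Multiset.map_id M]
      exact Multiset.map_congr rfl fun P hP => (hg2 P hP).symm
    refine main_count (M.map g) ?_ (by simpa using h23) ?_
    · intro v hv
      obtain ⟨P, hP, rfl⟩ := Multiset.mem_map.1 hv
      exact (uni_iff _).1 (hg1 P hP)
    · intro c hc
      have h := hcon (ln c) (ln_isLine c hc)
      rw [← hMN, ← Multiset.countP_eq_card_filter, Multiset.countP_map,
        ← Multiset.countP_eq_card_filter] at h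
      simp only [pt_le_ln] at h
      have hle := Nat.le_of_lt_succ h
      convert hle
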